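/- Fix positive integers d_1,…,d_r. Then the family of real numbers 1/[K_{w,N,T} : K], indexed by all pairs of r-tuples T = (t_1,…,t_r) and N = (n_1,…,n_r) of positive integers, is summable; that is, the double series ∑_T ∑_N 1/[K_{w,N,T} : K] converges. -/

import Mathlib

open scoped BigOperators

/-- A fixed primitive `n`-th root of unity in `ℂ` (for `n ≥ 1`). -/
noncomputable def primRoot (n : ℕ) : ℂ := Complex.exp (2 * Real.pi * Complex.I / n)

/-- The subfield `K(ζ_n, α_1^{1/t_1}, …, α_r^{1/t_r})` of `ℂ`, obtained by adjoining to `K`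
a primitive `n`-th root of unity and, for each `i`, all complex roots of `X^{t_i} - α_i`. -/
noncomputable def kummerField (K : IntermediateField ℚ ℂ) {r : ℕ} (α : Fin r → ℂ)
    (n : ℕ) (t : Fin r → ℕ) : IntermediateField ℚ ℂ :=
  K ⊔ IntermediateField.adjoin ℚ ({primRoot n} ∪ ⋃ i, {z : ℂ | z ^ (t i) = α i})

/-- The cyclotomic extension `K(ζ_n)` of `K` inside `ℂ`. -/
noncomputable def cycloField (K : IntermediateField ℚ ℂ) (n : ℕ) : IntermediateField ℚ ℂ :=
  K ⊔ IntermediateField.adjoin ℚ {primRoot n}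

lemma cyclo_le_kummer (K : IntermediateField ℚ ℂ) {r : ℕ} (α : Fin r → ℂ)
    (n : ℕ) (t : Fin r → ℕ) : cycloField K n ≤ kummerField K α n t :=
  sup_le_sup_left (IntermediateField.adjoin.mono _ _ _ Set.subset_union_left) _

lemma base_le_kummer (K : IntermediateField ℚ ℂ) {r : ℕ} (α : Fin r → ℂ)
    (n : ℕ) (t : Fin r → ℕ) : K ≤ kummerField K α n t :=
  le_sup_left

/-!
Write `F = K(ζ_M, α_1^{1/m_1}, …, α_r^{1/m_r})` with every `m_i ∣ M`. The radicals
`x_e = ∏ α_i^{e_i/m_i}`, `0 ≤ e_i < m_i`, define Kummer characters of `Gal(F/K(ζ_M))`, and there are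
at most `[F : K(ζ_M)]` characters. If `x_e` and `x_{e'}` have the same character, then
`a = (x_e / x_{e'})^M ∈ K` is an `M`-th power in the abelian extension `K(ζ_M)` of `K`, and by a
theorem of Schinzel `a^w` is an `M`-th power `b^M` already in `K`, where `w` is the number of roots
of unity in `K`. The height of `b` is bounded independently of `M` and the `m_i`, so by Northcott's
theorem and multiplicative independence a character arises from a bounded number of `e`. Hence
`φ(M) ∏ m_i ≤ C [F : K]`. Since `M ≤ 2 φ(M)²` and `m_i ≤ M`, the factor `φ(M)` exceeds a constant
times `∏ m_i^δ` with `δ = 1 / (2 (r + 1))`, which gives convergence.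
-/

section Totient

lemma le_totient_sq_of_odd {n : ℕ} (hn : Odd n) : n ≤ n.totient ^ 2 := by
  induction n using Nat.recOnPosPrimePosCoprime with
  | zero => simp
  | one => simp
  | prime_pow p k hp hk =>
    obtain ⟨q, rfl⟩ : ∃ q, p = q + 3 := by
      have hp2 : p ≠ 2 := by
        rintro rfl
        exact absurd ((Nat.odd_pow_iff hk.ne').1 hn) (by decide)
      exact Nat.exists_eq_add_of_le' (hp.two_le.lt_of_ne' hp2)
    obtain ⟨j, rfl⟩ := Nat.exists_eq_add_one.2 hk
    calc (q + 3) ^ (j + 1) = (q + 3) ^ j * (q + 3) := pow_succ _ _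
      _ ≤ ((q + 3) ^ j) ^ 2 * (q + 2) ^ 2 := by
        refine Nat.mul_le_mul (Nat.le_self_pow two_ne_zero _) ?_
        nlinarith
      _ = ((q + 3) ^ (j + 1)).totient ^ 2 := by
        rw [Nat.totient_prime_pow_succ hp, mul_pow, Nat.add_succ_sub_one]
  | coprime a b _ _ hab iha ihb =>
    rw [Nat.odd_mul] at hn
    rw [Nat.totient_mul hab, mul_pow]
    exact Nat.mul_le_mul (iha hn.1) (ihb hn.2)

lemma le_two_mul_totient_sq (n : ℕ) : n ≤ 2 * n.totient ^ 2 := by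
  rcases eq_or_ne n 0 with rfl | hn
  · simp
  obtain ⟨k, m, hm, rfl⟩ := Nat.exists_eq_two_pow_mul_odd hn
  have two_pow_le : 2 ^ k ≤ 2 * (2 ^ k).totient ^ 2 := by
    rcases k with _ | j
    · simp
    · rw [Nat.totient_prime_pow_succ Nat.prime_two, Nat.add_one_sub_one, mul_one, pow_succ']
      exact Nat.mul_le_mul_left 2 (Nat.le_self_pow two_ne_zero _)
  rw [Nat.totient_mul (hm.coprime_two_left.pow_left k), mul_pow, ← mul_assoc]
  exact Nat.mul_le_mul two_pow_le (le_totient_sq_of_odd hm)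

lemma prod_rpow_le_totient_mul_prod {ι : Type*} [Fintype ι] {m : ι → ℕ} {M : ℕ} (hM : M ≠ 0)
    (hm : ∀ i, m i ∣ M) :
    ∏ i, (m i : ℝ) ^ (1 + 1 / (2 * (Fintype.card ι + 1)) : ℝ) ≤
      √2 * (M.totient * ∏ i, (m i : ℝ)) := by
  set δ : ℝ := 1 / (2 * (Fintype.card ι + 1)) with hδ
  have card_mul_δ_le : Fintype.card ι * δ ≤ 1 / 2 := by
    rw [hδ, mul_one_div, div_le_div_iff₀ (by positivity) (by positivity)]
    linarith
  have prod_rpow_δ_le : ∏ i, (m i : ℝ) ^ δ ≤ √2 * M.totient :=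
    calc ∏ i, (m i : ℝ) ^ δ ≤ ∏ _i : ι, (M : ℝ) ^ δ := by
          gcongr with i
          exact Nat.le_of_dvd (Nat.pos_of_ne_zero hM) (hm i)
      _ = (M : ℝ) ^ (Fintype.card ι * δ) := by
          rw [Finset.prod_const, Finset.card_univ, mul_comm, Real.rpow_mul_natCast (by positivity)]
      _ ≤ (M : ℝ) ^ (1 / 2 : ℝ) :=
          Real.rpow_le_rpow_of_exponent_le (by exact_mod_cast Nat.one_le_iff_ne_zero.2 hM)
            card_mul_δ_le
      _ ≤ √(2 * M.totient ^ 2) := by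
          rw [← Real.sqrt_eq_rpow]
          exact Real.sqrt_le_sqrt (by exact_mod_cast le_two_mul_totient_sq M)
      _ = √2 * M.totient := by rw [Real.sqrt_mul (by simp), Real.sqrt_sq (by simp)]
  calc ∏ i, (m i : ℝ) ^ (1 + δ) = (∏ i, (m i : ℝ) ^ δ) * ∏ i, (m i : ℝ) := by
        rw [← Finset.prod_mul_distrib]
        exact Finset.prod_congr rfl fun i _ => by
          rw [Real.rpow_one_add' (by positivity) (by positivity), mul_comm]
    _ ≤ √2 * M.totient * ∏ i, (m i : ℝ) := by gcongr
    _ = √2 * (M.totient * ∏ i, (m i : ℝ)) := mul_assoc _ _ _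

end Totient

lemma summable_prod_apply {ι : Type*} [Fintype ι] {κ : ι → Type*} {f : ∀ i, κ i → ℝ}
    (hf : ∀ i, Summable (f i)) (hf0 : ∀ i k, 0 ≤ f i k) :
    Summable fun N : ∀ i, κ i => ∏ i, f i (N i) := by
  classical
  refine summable_of_sum_le (c := ∏ i, ∑' k, f i k)
    (fun N => Finset.prod_nonneg fun i _ => hf0 i _) fun u => ?_
  let s (i : ι) : Finset (κ i) := u.image (· i)
  have u_subset : u ⊆ Fintype.piFinset s := fun N hN =>
    Fintype.mem_piFinset.2 fun i => Finset.mem_image_of_mem (· i) hN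
  calc ∑ N ∈ u, ∏ i, f i (N i) ≤ ∑ N ∈ Fintype.piFinset s, ∏ i, f i (N i) :=
        Finset.sum_le_sum_of_subset_of_nonneg u_subset fun N _ _ =>
          Finset.prod_nonneg fun i _ => hf0 i _
    _ = ∏ i, ∑ k ∈ s i, f i k := (Finset.prod_univ_sum s f).symm
    _ ≤ ∏ i, ∑' k, f i k := by
        gcongr with i
        · exact fun i _ => Finset.sum_nonneg fun k _ => hf0 i k
        · exact (hf i).sum_le_tsum _ fun k _ => hf0 i k

lemma summable_prod_one_div_mul_rpow {ι : Type*} [Fintype ι] {p : ℝ} (hp : 1 < p) :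
    Summable fun P : (ι → ℕ+) × (ι → ℕ+) =>
      ∏ i, 1 / (((P.2 i : ℕ) * (P.1 i : ℕ) : ℕ) : ℝ) ^ p := by
  have summable_one_div_rpow : Summable fun n : ℕ+ => 1 / (n : ℝ) ^ p :=
    (Real.summable_one_div_nat_rpow.2 hp).comp_injective PNat.coe_injective
  let g (N : ι → ℕ+) : ℝ := ∏ i, 1 / (N i : ℝ) ^ p
  have g_nonneg : 0 ≤ g := fun N => Finset.prod_nonneg fun i _ => by positivity
  have summable_g : Summable g :=
    summable_prod_apply (f := fun _ (n : ℕ+) => 1 / (n : ℝ) ^ p) (fun _ => summable_one_div_rpow)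
      fun _ _ => by positivity
  have g_mul_g (P : (ι → ℕ+) × (ι → ℕ+)) :
      g P.1 * g P.2 = ∏ i, 1 / (((P.2 i : ℕ) * (P.1 i : ℕ) : ℕ) : ℝ) ^ p := by
    rw [← Finset.prod_mul_distrib]
    refine Finset.prod_congr rfl fun i _ => ?_
    rw [Nat.cast_mul, Real.mul_rpow (by positivity) (by positivity), one_div_mul_one_div_rev]
  exact (summable_g.mul_of_nonneg summable_g g_nonneg g_nonneg).congr g_mul_g

lemma ne_zero_of_pow_eq_algebraMap {K F : Type*} [Field K] [Field F] [Algebra K F] {n : ℕ}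
    (hn : n ≠ 0) {a : K} (ha : a ≠ 0) {x : F} (hx : x ^ n = algebraMap K F a) : x ≠ 0 := by
  rw [← pow_ne_zero_iff hn, hx]
  exact (map_ne_zero _).2 ha

section AbelianExtension

variable {K L : Type*} [Field K] [Field L] [Algebra K L] {M : ℕ} [NeZero M] {ζ x : L}

lemma algEquiv_apply_eq_pow (hζ : IsPrimitiveRoot ζ M) {σ : Gal(L/K)} {k : ℕ}
    (hσ : σ ζ = ζ ^ k) {u : L} (hu : u ^ M = 1) : σ u = u ^ k := by
  obtain ⟨j, -, rfl⟩ := hζ.eq_pow_of_pow_eq_one hu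
  rw [map_pow, hσ, pow_right_comm]

variable [IsAbelianGalois K L]

lemma exists_pow_eq_mul_pow_of_apply_eq_pow (hζ : IsPrimitiveRoot ζ M) {a : Kˣ}
    (hx : x ^ M = algebraMap K L a) {σ : Gal(L/K)} {k : ℕ} (hσ : σ ζ = ζ ^ k) :
    ∃ b : Kˣ, a ^ k = a * b ^ M := by
  have x_ne_zero : x ≠ 0 := ne_zero_of_pow_eq_algebraMap (NeZero.ne M) a.ne_zero hx
  have fixed (τ : Gal(L/K)) : τ (x ^ k / σ x) = x ^ k / σ x := by
    obtain ⟨u, hu⟩ : ∃ u, τ x = u * x := ⟨τ x / x, (div_mul_cancel₀ _ x_ne_zero).symm⟩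
    have u_pow : u ^ M = 1 := by
      apply mul_right_cancel₀ (pow_ne_zero M x_ne_zero)
      rw [← mul_pow, ← hu, ← map_pow, hx, AlgEquiv.commutes, one_mul]
    have u_ne_zero : u ≠ 0 := by
      rintro rfl
      simp [zero_pow (NeZero.ne M)] at u_pow
    have τ_σ_x : τ (σ x) = u ^ k * σ x := by
      rw [← AlgEquiv.mul_apply, mul_comm', AlgEquiv.mul_apply, hu, map_mul,
        algEquiv_apply_eq_pow hζ hσ u_pow]
    rw [map_div₀, map_pow, hu, τ_σ_x, mul_pow, mul_div_mul_left _ _ (pow_ne_zero k u_ne_zero)]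
  obtain ⟨b, hb⟩ := (InfiniteGalois.mem_range_algebraMap_iff_fixed _).2 fixed
  have pow_eq : (a : K) ^ k = a * b ^ M := by
    apply (algebraMap K L).injective
    rw [map_mul, map_pow, map_pow, hb, div_pow, ← map_pow σ, hx, AlgEquiv.commutes,
      pow_right_comm, hx, mul_div_cancel₀ _ (by simp)]
  have b_ne_zero : b ≠ 0 := by
    rintro rfl
    simp [zero_pow (NeZero.ne M)] at pow_eq
  exact ⟨Units.mk0 b b_ne_zero, Units.ext (by simpa using pow_eq)⟩

-- The witness `g` is the order of `a` in `Kˣ / (Kˣ)ᴹ`: an automorphism raising `ζ` to the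
-- `k`-th power satisfies `k ≡ 1 (mod g)`, so it fixes the primitive `g`-th root `ζ ^ (M / g)`.
theorem exists_isPrimitiveRoot_and_pow_eq_pow (hζ : IsPrimitiveRoot ζ M) {a : Kˣ}
    (hx : x ^ M = algebraMap K L a) :
    ∃ g ≠ 0, (∃ z : K, IsPrimitiveRoot z g) ∧ ∃ b : K, (a : K) ^ g = b ^ M := by
  let π : Kˣ →* Kˣ ⧸ (powMonoidHom M : Kˣ →* Kˣ).range := QuotientGroup.mk' _
  have π_eq_one {c : Kˣ} : π c = 1 ↔ ∃ b, b ^ M = c := QuotientGroup.eq_one_iff c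
  have π_a_pow : π a ^ M = 1 := (map_pow π a M).symm.trans (π_eq_one.2 ⟨a, rfl⟩)
  obtain ⟨q, hq⟩ := orderOf_dvd_of_pow_eq_one π_a_pow
  have ζq_primitive : IsPrimitiveRoot (ζ ^ q) (orderOf (π a)) :=
    hζ.pow (NeZero.pos M) (hq.trans (mul_comm _ q))
  have fixed (σ : Gal(L/K)) : σ (ζ ^ q) = ζ ^ q := by
    obtain ⟨k, -, hk⟩ := hζ.eq_pow_of_pow_eq_one (ξ := σ ζ) (by
      rw [← map_pow, hζ.pow_eq_one, map_one])
    obtain ⟨b, hb⟩ := exists_pow_eq_mul_pow_of_apply_eq_pow hζ hx hk.symm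
    have k_modEq_one : k ≡ 1 [MOD orderOf (π a)] := by
      have π_a_finite_order := isOfFinOrder_iff_pow_eq_one.2 ⟨M, NeZero.pos M, π_a_pow⟩
      rw [← π_a_finite_order.pow_eq_pow_iff_modEq, pow_one, ← map_pow, hb, map_mul,
        π_eq_one.2 ⟨b, rfl⟩]
      exact mul_one (π a)
    rw [map_pow, ← hk, pow_right_comm, pow_eq_pow_of_modEq k_modEq_one ζq_primitive.pow_eq_one,
      pow_one]
  obtain ⟨z, hz⟩ := (InfiniteGalois.mem_range_algebraMap_iff_fixed _).2 fixed
  obtain ⟨b, hb⟩ := π_eq_one.1 ((map_pow π a _).trans (pow_orderOf_eq_one _))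
  exact ⟨orderOf (π a), left_ne_zero_of_mul (hq ▸ NeZero.ne M),
    ⟨z, .of_map_of_injective (hz ▸ ζq_primitive) (algebraMap K L).injective⟩,
    b, by exact_mod_cast hb.symm⟩

theorem exists_pow_torsionOrder_eq_pow [NumberField K] (hζ : IsPrimitiveRoot ζ M) {a : K}
    (ha : a ≠ 0) (hx : x ^ M = algebraMap K L a) :
    ∃ b : K, a ^ NumberField.Units.torsionOrder K = b ^ M := by
  obtain ⟨g, g_ne_zero, ⟨z, hz⟩, b, hb⟩ :=
    exists_isPrimitiveRoot_and_pow_eq_pow hζ (a := Units.mk0 a ha) hx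
  have : NeZero g := ⟨g_ne_zero⟩
  obtain ⟨c, hc⟩ := NumberField.Units.dvd_torsionOrder_of_isPrimitiveRoot hz
  exact ⟨b ^ c, by rw [hc, pow_mul, ← Units.val_mk0 ha, hb, pow_right_comm]⟩

end AbelianExtension

lemma card_finset_monoidHom_le {G R : Type*} [MulOneClass G] [Finite G] [CommRing R] [IsDomain R]
    (s : Finset (G →* R)) : s.card ≤ Nat.card G := by
  have := Fintype.ofFinite G
  have linearIndependent_coe : LinearIndependent R fun χ : s => (χ.1 : G → R) :=
    (linearIndependent_monoidHom G R).comp _ Subtype.val_injective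
  simpa using linearIndependent_coe.fintype_card_le_finrank

section KummerCharacter

variable {L F : Type*} [Field L] [Field F] [Algebra L F] {M : ℕ} [NeZero M] {ζ : L}

lemma mem_range_algebraMap_of_pow_eq_one (hζ : IsPrimitiveRoot ζ M) {u : F} (hu : u ^ M = 1) :
    u ∈ Set.range (algebraMap L F) := by
  obtain ⟨j, -, rfl⟩ := (hζ.map_of_injective (algebraMap L F).injective).eq_pow_of_pow_eq_one hu
  exact ⟨ζ ^ j, map_pow _ _ _⟩

/-- The character `σ ↦ σ x / x` of `Gal(F/L)` attached to a nonzero radical `x`, i.e. one with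
`x ^ M ∈ L`, when `L` contains a primitive `M`-th root of unity. -/
def kummerCharacter (hζ : IsPrimitiveRoot ζ M) {x : F} (hx : x ≠ 0)
    (hxM : x ^ M ∈ Set.range (algebraMap L F)) : Gal(F/L) →* F where
  toFun σ := σ x / x
  map_one' := div_self hx
  map_mul' σ τ := by
    have τx_div_pow : (τ x / x) ^ M = 1 := by
      obtain ⟨a, ha⟩ := hxM
      rw [div_pow, ← map_pow, ← ha, AlgEquiv.commutes, div_self]
      rw [ha]
      exact pow_ne_zero M hx
    obtain ⟨u, hu⟩ := mem_range_algebraMap_of_pow_eq_one hζ τx_div_pow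
    have hτ : τ x = algebraMap L F u * x := by rw [hu, div_mul_cancel₀ _ hx]
    rw [AlgEquiv.mul_apply, hτ, map_mul, AlgEquiv.commutes, mul_div_assoc,
      mul_div_cancel_right₀ _ hx, mul_comm]

variable [FiniteDimensional L F] [IsGalois L F]

lemma div_mem_range_algebraMap_of_kummerCharacter_eq (hζ : IsPrimitiveRoot ζ M) {x y : F}
    (hx : x ≠ 0) (hy : y ≠ 0) {hxM : x ^ M ∈ Set.range (algebraMap L F)}
    {hyM : y ^ M ∈ Set.range (algebraMap L F)}
    (h : kummerCharacter hζ hx hxM = kummerCharacter hζ hy hyM) :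
    x / y ∈ Set.range (algebraMap L F) := by
  refine (IsGalois.mem_range_algebraMap_iff_fixed _).2 fun σ => ?_
  have hσ : σ x / x = σ y / y := DFunLike.congr_fun h σ
  rw [map_div₀]
  exact (div_eq_div_iff_div_eq_div' hx ((map_ne_zero σ).2 hy)).1 hσ

theorem card_le_mul_finrank_of_div_mem_range {κ : Type*} [Fintype κ] (hζ : IsPrimitiveRoot ζ M)
    {x : κ → F} (hx : ∀ j, x j ≠ 0) (hxM : ∀ j, x j ^ M ∈ Set.range (algebraMap L F)) {C : ℕ}
    (hC : ∀ j₀, ∀ s : Finset κ, (∀ j ∈ s, x j / x j₀ ∈ Set.range (algebraMap L F)) → s.card ≤ C) :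
    Fintype.card κ ≤ C * Module.finrank L F := by
  classical
  let χ (j : κ) : Gal(F/L) →* F := kummerCharacter hζ (hx j) (hxM j)
  have card_fiber_le (c) (hc : c ∈ Finset.univ.image χ) :
      (Finset.univ.filter fun j => χ j = c).card ≤ C := by
    obtain ⟨j₀, -, rfl⟩ := Finset.mem_image.1 hc
    refine hC j₀ _ fun j hj => ?_
    exact div_mem_range_algebraMap_of_kummerCharacter_eq hζ (hx j) (hx j₀)
      (Finset.mem_filter.1 hj).2
  calc Fintype.card κ ≤ C * (Finset.univ.image χ).card :=
        Finset.card_le_mul_card_image Finset.univ C card_fiber_le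
    _ ≤ C * Module.finrank L F := by
        rw [← IsGalois.card_aut_eq_finrank]
        exact Nat.mul_le_mul_left C (card_finset_monoidHom_le _)

end KummerCharacter

section Height

open Height

variable {K ι : Type*} [Field K] [Fintype ι] {M W : ℕ}

lemma logHeight₁_le_of_prod_zpow_pow_eq_pow [AdmissibleAbsValues K] (hM : M ≠ 0) {α : ι → K}
    {f : ι → ℤ} (hf : ∀ i, (f i).natAbs ≤ M) {b : K} (hb : (∏ i, α i ^ f i) ^ W = b ^ M) :
    logHeight₁ b ≤ W * ∑ i, logHeight₁ (α i) := by
  refine le_of_mul_le_mul_left ?_ (Nat.cast_pos (α := ℝ).2 (Nat.pos_of_ne_zero hM))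
  calc M * logHeight₁ b = W * logHeight₁ (∏ i, α i ^ f i) := by
        rw [← logHeight₁_pow, ← hb, logHeight₁_pow]
    _ ≤ W * ∑ i, logHeight₁ (α i ^ f i) := by
        gcongr
        exact logHeight₁_prod_le _ _
    _ ≤ W * ∑ i, M * logHeight₁ (α i) := by
        gcongr with i
        rw [logHeight₁_zpow]
        gcongr
        exact hf i
    _ = M * (W * ∑ i, logHeight₁ (α i)) := by rw [← Finset.mul_sum, mul_left_comm]

lemma prod_zpow_injective {α : ι → K} (hα : ∀ i, α i ≠ 0)
    (hind : ∀ e : ι → ℤ, ∏ i, α i ^ e i = 1 → e = 0) :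
    Function.Injective fun e : ι → ℤ => ∏ i, α i ^ e i := by
  refine fun e e' h => sub_eq_zero.1 (hind _ ?_)
  simp only [Pi.sub_apply, zpow_sub₀ (hα _), Finset.prod_div_distrib]
  exact (div_eq_one_iff_eq (Finset.prod_ne_zero_iff.2 fun i _ => zpow_ne_zero _ (hα i))).2 h

theorem card_le_ncard_logHeight₁_le [NumberField K] (hM : M ≠ 0) (hW : W ≠ 0) {α : ι → K}
    (hα : ∀ i, α i ≠ 0) (hind : ∀ e : ι → ℤ, ∏ i, α i ^ e i = 1 → e = 0) {s : Finset (ι → ℤ)}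
    (hs : ∀ f ∈ s, ∀ i, (f i).natAbs ≤ M)
    (hsW : ∀ f ∈ s, ∃ b : K, (∏ i, α i ^ f i) ^ W = b ^ M) :
    s.card ≤ {b : K | logHeight₁ b ≤ W * ∑ i, logHeight₁ (α i)}.ncard := by
  choose! b hb using hsW
  rw [← Set.ncard_coe_finset]
  refine Set.ncard_le_ncard_of_injOn b (fun f hf => ?_) (fun f hf g hg hfg => ?_)
    (NumberField.finite_setOfPred_logHeight₁_le K _)
  · exact logHeight₁_le_of_prod_zpow_pow_eq_pow hM (hs f hf) (hb f hf)
  · have prod_zpow_mul_eq : ∏ i, α i ^ (f i * W) = ∏ i, α i ^ (g i * W) := by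
      simp only [zpow_mul, zpow_natCast, Finset.prod_pow, hb f hf, hb g hg, hfg]
    exact funext fun i => mul_right_cancel₀ (Nat.cast_ne_zero.2 hW)
      (congrFun (prod_zpow_injective hα hind prod_zpow_mul_eq) i)

end Height

section Degree

variable {K F ι : Type*} [Field K] [Field F] [Algebra K F] [Fintype ι] {α : ι → K} {β : ι → F}
  {M : ℕ} {m : ι → ℕ}

lemma prod_zpow_pow_eq_algebraMap {q : ι → ℕ} (hq : ∀ i, M = m i * q i)
    (hβ : ∀ i, β i ^ m i = algebraMap K F (α i)) (e : ι → ℤ) :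
    (∏ i, β i ^ e i) ^ M = algebraMap K F (∏ i, α i ^ (e i * q i)) := by
  rw [map_prod, ← Finset.prod_pow]
  refine Finset.prod_congr rfl fun i _ => ?_
  rw [map_zpow₀, ← hβ i, ← zpow_natCast, ← zpow_natCast, ← zpow_mul, ← zpow_mul, hq i]
  push_cast
  ring_nf

/-- The number of `b ∈ K` whose logarithmic height is at most `w` times the sum of the heights of
the `α i`, where `w` is the number of roots of unity in `K`; it is finite by Northcott's theorem.
It bounds how far adjoining radicals of the `α i` falls short of having maximal degree. -/
noncomputable def kummerDefectBound [NumberField K] (α : ι → K) : ℕ :=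
  {b : K | Height.logHeight₁ b ≤
    NumberField.Units.torsionOrder K * ∑ i, Height.logHeight₁ (α i)}.ncard

variable [NumberField K] [NeZero M]

section Tower

variable {L : Type*} [Field L] [Algebra K L] [Algebra L F] [IsScalarTower K L F]
  [IsAbelianGalois K L] {ζ : L}

lemma card_le_kummerDefectBound_of_div_mem_range (hα : ∀ i, α i ≠ 0)
    (hind : ∀ e : ι → ℤ, ∏ i, α i ^ e i = 1 → e = 0) (hm : ∀ i, m i ∣ M)
    (hζ : IsPrimitiveRoot ζ M) (hβ : ∀ i, β i ^ m i = algebraMap K F (α i))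
    (e₀ : ∀ i, Fin (m i)) {s : Finset (∀ i, Fin (m i))}
    (hs : ∀ e ∈ s, (∏ i, β i ^ (e i : ℤ)) / ∏ i, β i ^ (e₀ i : ℤ) ∈ Set.range (algebraMap L F)) :
    s.card ≤ kummerDefectBound α := by
  classical
  have β_ne_zero (i) : β i ≠ 0 :=
    ne_zero_of_pow_eq_algebraMap (ne_zero_of_dvd_ne_zero (NeZero.ne M) (hm i)) (hα i) (hβ i)
  choose q hq using hm
  have q_ne_zero (i) : (q i : ℤ) ≠ 0 :=
    Nat.cast_ne_zero.2 (right_ne_zero_of_mul (hq i ▸ NeZero.ne M))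
  let f (e : ∀ i, Fin (m i)) (i : ι) : ℤ := ((e i : ℤ) - (e₀ i : ℤ)) * q i
  have f_injective : Function.Injective f := fun e e' h => funext fun i => by
    have := mul_right_cancel₀ (q_ne_zero i) (congrFun h i)
    exact Fin.ext (by omega)
  rw [← Finset.card_image_of_injective s f_injective]
  refine card_le_ncard_logHeight₁_le (NeZero.ne M) (NumberField.Units.torsionOrder_ne_zero K) hα
    hind (Finset.forall_mem_image.2 fun e _ i => ?_) (Finset.forall_mem_image.2 fun e he => ?_)
  · rw [Int.natAbs_mul, Int.natAbs_natCast, hq i]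
    exact Nat.mul_le_mul_right _ (by omega)
  · obtain ⟨y, hy⟩ := hs e he
    refine exists_pow_torsionOrder_eq_pow hζ
      (Finset.prod_ne_zero_iff.2 fun i _ => zpow_ne_zero _ (hα i)) (x := y) ?_
    apply (algebraMap L F).injective
    rw [map_pow, hy, ← Finset.prod_div_distrib, ← IsScalarTower.algebraMap_apply K L F,
      ← prod_zpow_pow_eq_algebraMap hq hβ]
    simp only [zpow_sub₀ (β_ne_zero _)]

theorem prod_le_kummerDefectBound_mul_finrank [FiniteDimensional L F] [IsGalois L F]
    (hα : ∀ i, α i ≠ 0) (hind : ∀ e : ι → ℤ, ∏ i, α i ^ e i = 1 → e = 0) (hm : ∀ i, m i ∣ M)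
    (hζ : IsPrimitiveRoot ζ M) (hβ : ∀ i, β i ^ m i = algebraMap K F (α i)) :
    ∏ i, m i ≤ kummerDefectBound α * Module.finrank L F := by
  classical
  have β_ne_zero (i) : β i ≠ 0 :=
    ne_zero_of_pow_eq_algebraMap (ne_zero_of_dvd_ne_zero (NeZero.ne M) (hm i)) (hα i) (hβ i)
  let x (e : ∀ i, Fin (m i)) : F := ∏ i, β i ^ (e i : ℤ)
  have x_ne_zero (e) : x e ≠ 0 := Finset.prod_ne_zero_iff.2 fun i _ => zpow_ne_zero _ (β_ne_zero i)
  have x_pow_mem (e) : x e ^ M ∈ Set.range (algebraMap L F) := by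
    choose q hq using hm
    rw [prod_zpow_pow_eq_algebraMap hq hβ, IsScalarTower.algebraMap_apply K L F]
    exact Set.mem_range_self _
  calc ∏ i, m i = Fintype.card (∀ i, Fin (m i)) := by simp
    _ ≤ kummerDefectBound α * Module.finrank L F :=
      card_le_mul_finrank_of_div_mem_range hζ x_ne_zero x_pow_mem fun e₀ _ =>
        card_le_kummerDefectBound_of_div_mem_range hα hind hm hζ hβ e₀

end Tower

theorem totient_mul_prod_le_mul_finrank [FiniteDimensional K F] [IsGalois K F]
    (hα : ∀ i, α i ≠ 0) (hind : ∀ e : ι → ℤ, ∏ i, α i ^ e i = 1 → e = 0) (hm : ∀ i, m i ∣ M)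
    {ζ : F} (hζ : IsPrimitiveRoot ζ M) (hβ : ∀ i, β i ^ m i = algebraMap K F (α i)) :
    M.totient * ∏ i, m i ≤ Module.finrank ℚ K * kummerDefectBound α * Module.finrank K F := by
  let L := IntermediateField.adjoin K {ζ}
  have : IsCyclotomicExtension {M} K L := hζ.intermediateField_adjoin_isCyclotomicExtension K
  have : IsAbelianGalois K L := IsCyclotomicExtension.isAbelianGalois {M} K L
  have : CharZero L := charZero_of_injective_algebraMap (algebraMap K L).injective
  have : FiniteDimensional ℚ L := .trans ℚ K L
  obtain ⟨ξ, hξ⟩ := IsCyclotomicExtension.exists_isPrimitiveRoot K L (Set.mem_singleton M)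
    (NeZero.ne M)
  have totient_le : M.totient ≤ Module.finrank ℚ L := by
    simpa using hξ.lcm_totient_le_finrank hξ
      (by simpa using Polynomial.cyclotomic.irreducible_rat (NeZero.pos M))
  calc M.totient * ∏ i, m i
      ≤ Module.finrank ℚ L * (kummerDefectBound α * Module.finrank L F) :=
        Nat.mul_le_mul totient_le (prod_le_kummerDefectBound_mul_finrank hα hind hm hξ hβ)
    _ = Module.finrank ℚ K * kummerDefectBound α * Module.finrank K F := by
        rw [← Module.finrank_mul_finrank ℚ K L, ← Module.finrank_mul_finrank K L F]
        ring

end Degree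

section KummerField

open Polynomial

/-- The polynomial `(X ^ M - 1) * ∏ i, (X ^ m i - α i)`, whose splitting field over `K` is
`K(ζ_M, α_1^{1/m_1}, …, α_r^{1/m_r})`. -/
noncomputable def kummerPolynomial {K ι : Type*} [Field K] [Fintype ι] (α : ι → K) (M : ℕ)
    (m : ι → ℕ) : K[X] :=
  (X ^ M - 1) * ∏ i, (X ^ m i - C (α i))

lemma mem_rootSet_kummerPolynomial {K F ι : Type*} [Field K] [Field F] [Algebra K F] [Fintype ι]
    {α : ι → K} {M : ℕ} (hM : M ≠ 0) {m : ι → ℕ} (hm : ∀ i, m i ≠ 0) {z : F} :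
    z ∈ (kummerPolynomial α M m).rootSet F ↔
      z ^ M = 1 ∨ ∃ i, z ^ m i = algebraMap K F (α i) := by
  have kummerPolynomial_ne_zero : kummerPolynomial α M m ≠ 0 :=
    mul_ne_zero (X_pow_sub_C_ne_zero (Nat.pos_of_ne_zero hM) 1) <|
      Finset.prod_ne_zero_iff.2 fun i _ => X_pow_sub_C_ne_zero (Nat.pos_of_ne_zero (hm i)) _
  rw [mem_rootSet, and_iff_right kummerPolynomial_ne_zero]
  simp [kummerPolynomial, Finset.prod_eq_zero_iff, sub_eq_zero]

variable {K : IntermediateField ℚ ℂ} {r : ℕ} {α : Fin r → K} {M : ℕ} {m : Fin r → ℕ}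

lemma primRoot_isPrimitiveRoot (hM : M ≠ 0) : IsPrimitiveRoot (primRoot M) M :=
  Complex.isPrimitiveRoot_exp M hM

lemma primRoot_mem_kummerField (K : IntermediateField ℚ ℂ) (α : Fin r → ℂ) (M : ℕ)
    (m : Fin r → ℕ) : primRoot M ∈ kummerField K α M m :=
  (le_sup_right : _ ≤ kummerField K α M m) (IntermediateField.subset_adjoin _ _ (Or.inl rfl))

lemma mem_kummerField_of_pow_eq {α : Fin r → ℂ} {i : Fin r} {z : ℂ} (hz : z ^ m i = α i) :
    z ∈ kummerField K α M m :=
  (le_sup_right : _ ≤ kummerField K α M m)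
    (IntermediateField.subset_adjoin _ _ (Or.inr (Set.mem_iUnion.2 ⟨i, hz⟩)))

lemma extendScalars_kummerField_eq_adjoin (hM : M ≠ 0) (hm : ∀ i, m i ≠ 0) :
    IntermediateField.extendScalars (base_le_kummer K (fun i => (α i : ℂ)) M m) =
      IntermediateField.adjoin K ((kummerPolynomial α M m).rootSet ℂ) := by
  set E := IntermediateField.adjoin K ((kummerPolynomial α M m).rootSet ℂ)
  have mem_E {z : ℂ} (hz : z ^ M = 1 ∨ ∃ i, z ^ m i = α i) : z ∈ E.restrictScalars ℚ :=
    IntermediateField.subset_adjoin K _ ((mem_rootSet_kummerPolynomial hM hm).2 hz)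
  refine le_antisymm ((IntermediateField.extendScalars_le_iff _ E).2 (sup_le ?_ ?_))
    (IntermediateField.adjoin_le_iff.2 fun z hz => ?_)
  · exact fun z hz => E.algebraMap_mem ⟨z, hz⟩
  · rw [IntermediateField.adjoin_le_iff, Set.union_subset_iff, Set.iUnion_subset_iff]
    exact ⟨Set.singleton_subset_iff.2 (mem_E (Or.inl (primRoot_isPrimitiveRoot hM).pow_eq_one)),
      fun i z hz => mem_E (Or.inr ⟨i, hz⟩)⟩
  · rcases (mem_rootSet_kummerPolynomial hM hm).1 hz with hz | ⟨i, hz⟩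
    · have : NeZero M := ⟨hM⟩
      obtain ⟨j, -, rfl⟩ := (primRoot_isPrimitiveRoot hM).eq_pow_of_pow_eq_one hz
      exact pow_mem (primRoot_mem_kummerField K _ M m) j
    · exact mem_kummerField_of_pow_eq hz

lemma isSplittingField_kummerField (hM : M ≠ 0) (hm : ∀ i, m i ≠ 0) :
    IsSplittingField K
      (IntermediateField.extendScalars (base_le_kummer K (fun i => (α i : ℂ)) M m))
      (kummerPolynomial α M m) := by
  rw [extendScalars_kummerField_eq_adjoin hM hm]
  exact IntermediateField.adjoin_rootSet_isSplittingField (IsAlgClosed.splits _)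

theorem totient_mul_prod_le_mul_finrank_kummerField [NumberField K] (hα : ∀ i, α i ≠ 0)
    (hind : ∀ e : Fin r → ℤ, ∏ i, α i ^ e i = 1 → e = 0) (hM : M ≠ 0) (hm : ∀ i, m i ∣ M) :
    M.totient * ∏ i, m i ≤ Module.finrank ℚ K * kummerDefectBound α *
      Module.finrank K (IntermediateField.extendScalars
        (base_le_kummer K (fun i => (α i : ℂ)) M m)) := by
  have : NeZero M := ⟨hM⟩
  have m_ne_zero (i) : m i ≠ 0 := ne_zero_of_dvd_ne_zero hM (hm i)
  let F := IntermediateField.extendScalars (base_le_kummer K (fun i => (α i : ℂ)) M m)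
  have : IsSplittingField K F (kummerPolynomial α M m) := isSplittingField_kummerField hM m_ne_zero
  have : FiniteDimensional K F := IsSplittingField.finiteDimensional F (kummerPolynomial α M m)
  have : Normal K F := .of_isSplittingField (kummerPolynomial α M m)
  have : IsGalois K F := {}
  let ζ : F := ⟨primRoot M, primRoot_mem_kummerField K _ M m⟩
  have ζ_primitive : IsPrimitiveRoot ζ M :=
    .of_map_of_injective (f := algebraMap F ℂ) (primRoot_isPrimitiveRoot hM) F.val.injective
  have exists_root (i) : ∃ β : F, β ^ m i = algebraMap K F (α i) := by
    obtain ⟨z, hz⟩ := IsAlgClosed.exists_pow_nat_eq (α i : ℂ) (Nat.pos_of_ne_zero (m_ne_zero i))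
    exact ⟨⟨z, mem_kummerField_of_pow_eq hz⟩, Subtype.ext hz⟩
  choose β hβ using exists_root
  exact totient_mul_prod_le_mul_finrank hα hind hm ζ_primitive hβ

theorem one_div_finrank_kummerField_le [NumberField K] (hα : ∀ i, α i ≠ 0)
    (hind : ∀ e : Fin r → ℤ, ∏ i, α i ^ e i = 1 → e = 0) (hM : M ≠ 0) (hm : ∀ i, m i ∣ M) :
    1 / (Module.finrank K (IntermediateField.extendScalars
        (base_le_kummer K (fun i => (α i : ℂ)) M m)) : ℝ) ≤
      √2 * (Module.finrank ℚ K * kummerDefectBound α) *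
        ∏ i, 1 / (m i : ℝ) ^ (1 + 1 / (2 * (r + 1)) : ℝ) := by
  set D := Module.finrank K (IntermediateField.extendScalars
    (base_le_kummer K (fun i => (α i : ℂ)) M m))
  have prod_rpow_le : ∏ i, (m i : ℝ) ^ (1 + 1 / (2 * (r + 1)) : ℝ) ≤
      √2 * (Module.finrank ℚ K * kummerDefectBound α) * D := by
    calc ∏ i, (m i : ℝ) ^ (1 + 1 / (2 * (r + 1)) : ℝ) ≤ √2 * (M.totient * ∏ i, (m i : ℝ)) := by
          simpa using prod_rpow_le_totient_mul_prod hM hm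
      _ ≤ √2 * (Module.finrank ℚ K * kummerDefectBound α * D) := by
          gcongr √2 * ?_
          exact_mod_cast totient_mul_prod_le_mul_finrank_kummerField hα hind hM hm
      _ = √2 * (Module.finrank ℚ K * kummerDefectBound α) * D := (mul_assoc _ _ _).symm
  have prod_rpow_pos : 0 < ∏ i, (m i : ℝ) ^ (1 + 1 / (2 * (r + 1)) : ℝ) :=
    Finset.prod_pos fun i _ => Real.rpow_pos_of_pos
      (Nat.cast_pos.2 (Nat.pos_of_dvd_of_pos (hm i) (Nat.pos_of_ne_zero hM))) _
  have D_pos : (0 : ℝ) < D :=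
    (Nat.cast_nonneg D).lt_of_ne' (right_ne_zero_of_mul (prod_rpow_pos.trans_le prod_rpow_le).ne')
  rw [Finset.prod_div_distrib, Finset.prod_const_one, mul_one_div,
    div_le_div_iff₀ D_pos prod_rpow_pos, one_mul]
  exact prod_rpow_le

end KummerField

/-- Let `K ⊆ ℂ` be a number field and `α_1,…,α_r ∈ K^×` multiplicatively
independent. Fix positive integers `d_1,…,d_r`. Then the family `1/[K_{w,N,T} : K]`,
indexed by all pairs of `r`-tuples `T`, `N` of positive integers, is summable, where
`K_{w,N,T} = K(ζ_{[d_1t_1,…,d_rt_r,n_1t_1,…,n_rt_r]}, α_1^{1/n_1t_1},…,α_r^{1/n_rt_r})`. -/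
theorem summable_inv_degree_KwNT {r : ℕ} (K : IntermediateField ℚ ℂ)
    [FiniteDimensional ℚ K] (α : Fin r → ℂ)
    (hmem : ∀ i, α i ∈ K) (hα0 : ∀ i, α i ≠ 0)
    (hind : ∀ e : Fin r → ℤ, ∏ i, α i ^ e i = 1 → e = 0)
    (d : Fin r → ℕ) (hd : ∀ i, 0 < d i) :
    Summable (fun P : (Fin r → ℕ+) × (Fin r → ℕ+) =>
      (1 : ℝ) / (Module.finrank K (IntermediateField.extendScalars
        (base_le_kummer K α
          (Nat.lcm (Finset.univ.lcm fun i => d i * (P.1 i : ℕ))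
            (Finset.univ.lcm fun i => (P.2 i : ℕ) * (P.1 i : ℕ)))
          (fun i => (P.2 i : ℕ) * (P.1 i : ℕ)))) : ℝ)) := by
  have : NumberField K := {}
  lift α to Fin r → K using hmem
  have hα (i) : α i ≠ 0 := by simpa using hα0 i
  have hind' (e : Fin r → ℤ) (he : ∏ i, α i ^ e i = 1) : e = 0 :=
    hind e (by simpa using congrArg (algebraMap K ℂ) he)
  have summable_bound : Summable fun P : (Fin r → ℕ+) × (Fin r → ℕ+) =>
      ∏ i, 1 / (((P.2 i : ℕ) * (P.1 i : ℕ) : ℕ) : ℝ) ^ (1 + 1 / (2 * (r + 1)) : ℝ) :=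
    summable_prod_one_div_mul_rpow (lt_add_of_pos_right 1 (by positivity))
  refine .of_nonneg_of_le (fun P => by positivity)
    (fun P => one_div_finrank_kummerField_le hα hind' ?_ fun i => ?_) (summable_bound.mul_left _)
  · simp [Nat.lcm_eq_zero_iff, Finset.lcm_eq_zero_iff, (hd _).ne']
  · exact (Finset.dvd_lcm (Finset.mem_univ i)).trans (Nat.dvd_lcm_right _ _)
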